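/- (Cramér's theorem) If X and Y are independent real-valued random variables and X + Y has a normal distribution, then X and Y each have a normal (possibly degenerate) distribution. -/

import Mathlib

open MeasureTheory ProbabilityTheory Filter

/-!
If `X + Y` is Gaussian, then `E exp(zX) * E exp(zY)` is the exponential of a quadratic polynomial,
so `z ↦ E exp(zX)` is an entire function without zeros and hence equals `exp g` with `g` entire.
Jensen's inequality bounds `E exp(tY)` below by `exp(t E Y)`, so `Re g z ≤ log E exp(X Re z)` grows
at most quadratically. By the Borel–Carathéodory inequality and Cauchy's estimates `g` is then a
polynomial of degree at most two, and a moment generating function of this form is Gaussian.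
-/

section EntireFunctions

open Asymptotics Bornology Polynomial Set

variable {F : Type*} [NormedAddCommGroup F] [NormedSpace ℂ F]

theorem exists_differentiable_exp_eq {f : ℂ → ℂ} (hf : Differentiable ℂ f)
    (hf_ne : ∀ z, f z ≠ 0) : ∃ g : ℂ → ℂ, Differentiable ℂ g ∧ ∀ z, f z = Complex.exp (g z) := by
  have hlogDeriv : Differentiable ℂ (fun z ↦ deriv f z / f z) :=
    hf.contDiff.differentiable_deriv_two.div hf hf_ne
  obtain ⟨g, hg_zero, hg⟩ :=
    (Differentiable.isExactOn_univ hlogDeriv).with_val_at 0 (Complex.log (f 0))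
  replace hg (z : ℂ) : HasDerivAt g (deriv f z / f z) z := hg z (mem_univ z)
  refine ⟨g, fun z ↦ (hg z).differentiableAt, fun z ↦ ?_⟩
  have hquot (w : ℂ) : HasDerivAt (fun w ↦ f w * Complex.exp (-g w)) 0 w := by
    convert! (hf w).hasDerivAt.mul (hg w).neg.cexp using 1
    field_simp [hf_ne w]
    ring
  have hconst : f z * Complex.exp (-g z) = f 0 * Complex.exp (-g 0) :=
    is_const_of_deriv_eq_zero (fun w ↦ (hquot w).differentiableAt) (fun w ↦ (hquot w).deriv) z 0
  rw [hg_zero, Complex.exp_neg, Complex.exp_neg, Complex.exp_log (hf_ne 0),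
    mul_inv_cancel₀ (hf_ne 0)] at hconst
  exact (mul_inv_eq_one₀ (Complex.exp_ne_zero _)).1 hconst

theorem iteratedDeriv_eq_zero_of_isLittleO_cobounded [CompleteSpace F] {f : ℂ → F}
    (hf : Differentiable ℂ f) {k : ℕ} (ho : f =o[cobounded ℂ] fun z ↦ ‖z‖ ^ k) (c : ℂ) :
    iteratedDeriv k f c = 0 := by
  have hbound (ε : ℝ) (hε : 0 < ε) : ‖iteratedDeriv k f c‖ ≤ k.factorial * 2 ^ k * ε := by
    obtain ⟨R₀, -, hR₀⟩ := hasBasis_cobounded_norm.eventually_iff.1 (ho.def hε)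
    let R := |R₀| + ‖c‖ + 1
    have hR : 0 < R := by positivity
    have hsphere : ∀ z ∈ Metric.sphere c R, ‖f z‖ ≤ ε * (2 * R) ^ k := fun z hz ↦ by
      have hzc : ‖z - c‖ = R := mem_sphere_iff_norm.1 hz
      have hz_ge : R₀ ≤ ‖z‖ := by linarith [le_abs_self R₀, norm_sub_le z c]
      have hz_le : ‖z‖ ≤ 2 * R := by linarith [norm_le_norm_sub_add z c, abs_nonneg R₀]
      calc ‖f z‖ ≤ ε * ‖z‖ ^ k := by simpa using hR₀ hz_ge
        _ ≤ ε * (2 * R) ^ k := by gcongr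
    calc ‖iteratedDeriv k f c‖ ≤ k.factorial * (ε * (2 * R) ^ k) / R ^ k :=
          Complex.norm_iteratedDeriv_le_of_forall_mem_sphere_norm_le k hR hf.diffContOnCl hsphere
      _ = k.factorial * 2 ^ k * ε := by rw [mul_pow]; field_simp
  refine norm_le_zero_iff.1 (le_of_forall_gt_imp_ge_of_dense fun δ hδ ↦ ?_)
  simpa only [mul_div_cancel₀ δ (by positivity : (k.factorial * 2 ^ k : ℝ) ≠ 0)] using
    hbound (δ / (k.factorial * 2 ^ k)) (by positivity)

theorem exists_polynomial_of_isBigO_cobounded {f : ℂ → ℂ} (hf : Differentiable ℂ f) {n : ℕ}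
    (hO : f =O[cobounded ℂ] fun z ↦ ‖z‖ ^ n) :
    ∃ p : ℂ[X], p.natDegree ≤ n ∧ ∀ z, f z = p.eval z := by
  have hvanish (k : ℕ) (hk : n < k) : iteratedDeriv k f 0 = 0 := by
    have hpow : (fun z : ℂ ↦ ‖z‖ ^ n) =o[cobounded ℂ] fun z ↦ ‖z‖ ^ k := by
      simpa only [norm_pow] using (isLittleO_pow_pow_cobounded_of_lt (R := ℂ) hk).norm_norm
    exact iteratedDeriv_eq_zero_of_isLittleO_cobounded hf (hO.trans_isLittleO hpow) 0
  let coeff (k : ℕ) : ℂ := (k.factorial : ℂ)⁻¹ * iteratedDeriv k f 0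
  refine ⟨∑ k ∈ Finset.range (n + 1), C (coeff k) * X ^ k,
    natDegree_sum_le_of_forall_le _ _ fun k hk ↦
      (natDegree_C_mul_X_pow_le _ _).trans (Finset.mem_range_succ_iff.1 hk), fun z ↦ ?_⟩
  rw [← Complex.taylorSeries_eq_of_entire' (c := 0) (z := z) hf,
    tsum_eq_sum (s := Finset.range (n + 1)) fun k hk ↦ ?_]
  · simp [eval_finsetSum, coeff]
  · rw [hvanish k (by simpa using hk), mul_zero, zero_mul]

theorem isBigO_cobounded_of_re_le {f : ℂ → ℂ} (hf : Differentiable ℂ f) {C : ℝ} {n : ℕ}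
    (hre : ∀ᶠ z in cobounded ℂ, (f z).re ≤ C * ‖z‖ ^ n) :
    f =O[cobounded ℂ] fun z ↦ ‖z‖ ^ n := by
  obtain ⟨R₀, -, hR₀⟩ := hasBasis_cobounded_norm.eventually_iff.1 hre
  obtain ⟨B, hB⟩ := (isCompact_closedBall (0 : ℂ) R₀).exists_bound_of_continuousOn
    hf.continuous.continuousOn
  let K := |C| + |B| + 1
  have hball {R : ℝ} (hR : 1 ≤ R) : MapsTo f (Metric.ball 0 R) {w | w.re ≤ K * R ^ n} :=
    fun w hw ↦ by
      have hwR : ‖w‖ < R := mem_ball_zero_iff.1 hw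
      have hRn : 1 ≤ R ^ n := one_le_pow₀ hR
      rcases le_total R₀ ‖w‖ with hw₀ | hw₀
      · calc (f w).re ≤ C * ‖w‖ ^ n := hR₀ hw₀
          _ ≤ K * R ^ n := by
            gcongr
            linarith [le_abs_self C, abs_nonneg B]
      · calc (f w).re ≤ B := (Complex.re_le_norm _).trans (hB w (mem_closedBall_zero_iff.2 hw₀))
          _ ≤ K * 1 := by linarith [le_abs_self B, abs_nonneg C]
          _ ≤ K * R ^ n := by gcongr
  refine .of_bound (2 * K * 2 ^ n + 3 * ‖f 0‖) ?_
  filter_upwards [eventually_cobounded_le_norm 1] with z hz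
  have : 0 < ‖z‖ := by linarith
  calc ‖f z‖ ≤ 2 * (K * (2 * ‖z‖) ^ n) * ‖z‖ / (2 * ‖z‖ - ‖z‖)
        + ‖f 0‖ * (2 * ‖z‖ + ‖z‖) / (2 * ‖z‖ - ‖z‖) :=
        Complex.borelCaratheodory (by positivity) hf.differentiableOn (hball (by linarith))
          (by positivity) (mem_ball_zero_iff.2 (by linarith))
    _ = 2 * K * 2 ^ n * ‖z‖ ^ n + 3 * ‖f 0‖ * 1 := by field_simp; ring
    _ ≤ 2 * K * 2 ^ n * ‖z‖ ^ n + 3 * ‖f 0‖ * ‖z‖ ^ n := by gcongr; exact one_le_pow₀ hz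
    _ = (2 * K * 2 ^ n + 3 * ‖f 0‖) * ‖‖z‖ ^ n‖ := by simp; ring

theorem exists_polynomial_eq_exp_of_norm_le_exp {f : ℂ → ℂ} (hf : Differentiable ℂ f)
    (hf_ne : ∀ z, f z ≠ 0) {C : ℝ} {n : ℕ}
    (hle : ∀ᶠ z in cobounded ℂ, ‖f z‖ ≤ Real.exp (C * ‖z‖ ^ n)) :
    ∃ p : ℂ[X], p.natDegree ≤ n ∧ ∀ z, f z = Complex.exp (p.eval z) := by
  obtain ⟨g, hg, hfg⟩ := exists_differentiable_exp_eq hf hf_ne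
  have hre : ∀ᶠ z in cobounded ℂ, (g z).re ≤ C * ‖z‖ ^ n := by
    simpa only [hfg, Complex.norm_exp, Real.exp_le_exp] using hle
  obtain ⟨p, hp, hgp⟩ :=
    exists_polynomial_of_isBigO_cobounded hg (isBigO_cobounded_of_re_le hg hre)
  exact ⟨p, hp, fun z ↦ by rw [hfg, hgp]⟩

end EntireFunctions

section MomentGeneratingFunction

variable {Ω : Type*} [MeasurableSpace Ω] {μ : Measure Ω} {X Y : Ω → ℝ}

theorem integrableExpSet_eq_univ_of_mgf_ne_zero (h : ∀ t, mgf X μ t ≠ 0) :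
    integrableExpSet X μ = Set.univ :=
  Set.eq_univ_of_forall fun t ↦ not_imp_comm.1 mgf_undef (h t)

theorem integrableExpSet_eq_univ_of_complexMGF_ne_zero (h : ∀ t : ℝ, complexMGF X μ t ≠ 0) :
    integrableExpSet X μ = Set.univ :=
  integrableExpSet_eq_univ_of_mgf_ne_zero <| by
    simpa only [complexMGF_ofReal, Complex.ofReal_ne_zero] using h

theorem complexMGF_add_of_indepFun (h : IndepFun X Y μ) (hX : AEMeasurable X μ)
    (hY : AEMeasurable Y μ) (z : ℂ) :
    complexMGF (X + Y) μ z = complexMGF X μ z * complexMGF Y μ z := by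
  have hexp : Measurable fun x : ℝ ↦ Complex.exp (z * x) := by fun_prop
  simp only [complexMGF, Pi.add_apply, Complex.ofReal_add, mul_add, Complex.exp_add]
  exact (h.comp hexp hexp).integral_fun_mul_eq_mul_integral
    (hexp.comp_aemeasurable hX).aestronglyMeasurable
    (hexp.comp_aemeasurable hY).aestronglyMeasurable

theorem exp_mul_integral_le_mgf [IsProbabilityMeasure μ] {t : ℝ} (hX : Integrable X μ)
    (hexp : Integrable (fun ω ↦ Real.exp (t * X ω)) μ) :
    Real.exp (t * μ[X]) ≤ mgf X μ t := by
  rw [← integral_const_mul]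
  exact convexOn_exp.map_integral_le Real.continuous_exp.continuousOn isClosed_univ
    (Eventually.of_forall fun _ ↦ Set.mem_univ _) (hX.const_mul t) hexp

theorem mgf_mul_exp_integral_le_mgf_add [IsProbabilityMeasure μ] {t : ℝ} (hindep : IndepFun X Y μ)
    (hX : AEMeasurable X μ) (hY : Integrable Y μ)
    (hexp : Integrable (fun ω ↦ Real.exp (t * Y ω)) μ) :
    mgf X μ t * Real.exp (t * μ[Y]) ≤ mgf (X + Y) μ t := by
  rw [hindep.mgf_add' hX.aestronglyMeasurable hY.aestronglyMeasurable]
  exact mul_le_mul_of_nonneg_left (exp_mul_integral_le_mgf hY hexp) mgf_nonneg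

theorem map_eq_map_of_mgf_eq [IsFiniteMeasure μ] {Ω' : Type*} [MeasurableSpace Ω']
    {μ' : Measure Ω'} [IsFiniteMeasure μ'] {Y : Ω' → ℝ}
    (hint : 0 ∈ interior (integrableExpSet X μ)) (h : mgf X μ = mgf Y μ') :
    μ.map X = μ'.map Y := by
  have hμμ' : μ = 0 ↔ μ' = 0 := by
    have hmass : μ.real Set.univ = μ'.real Set.univ := by simpa only [mgf_zero'] using congrFun h 0
    rw [← Measure.measure_univ_eq_zero, ← measureReal_eq_zero_iff, hmass, measureReal_eq_zero_iff,
      Measure.measure_univ_eq_zero]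
  have hX : AEMeasurable X μ := aemeasurable_of_mem_interior_integrableExpSet hint
  have hY : AEMeasurable Y μ' := by
    rw [integrableExpSet_eq_of_mgf' h hμμ'] at hint
    exact aemeasurable_of_mem_interior_integrableExpSet hint
  refine Measure.ext_of_charFun (funext fun t ↦ ?_)
  rw [← complexMGF_mul_I hX, ← complexMGF_mul_I hY]
  exact eqOn_complexMGF_of_mgf' h hμμ' (by simpa using hint)

theorem map_eq_gaussianReal_of_mgf_eq_exp [IsProbabilityMeasure μ] {a b : ℝ}
    (h : ∀ t, mgf X μ t = Real.exp (a * t + b * t ^ 2)) :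
    μ.map X = gaussianReal a (2 * b).toNNReal := by
  have hexp : integrableExpSet X μ = Set.univ :=
    integrableExpSet_eq_univ_of_mgf_ne_zero fun t ↦ by simp [h]
  have hint : 0 ∈ interior (integrableExpSet X μ) := by simp [hexp]
  have hb : 0 ≤ 2 * b := by
    have hJensen (t : ℝ) : t * μ[X] ≤ a * t + b * t ^ 2 := by
      rw [← Real.exp_le_exp, ← h]
      exact exp_mul_integral_le_mgf (integrable_of_mem_interior_integrableExpSet hint)
        (Set.eq_univ_iff_forall.1 hexp t)
    linarith [hJensen 1, hJensen (-1)]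
  rw [← Measure.map_id (μ := gaussianReal _ _)]
  refine map_eq_map_of_mgf_eq hint (funext fun t ↦ ?_)
  rw [h, mgf_id_gaussianReal, Real.coe_toNNReal _ hb]
  ring_nf

theorem exists_map_eq_gaussianReal_of_complexMGF_ne_zero [IsProbabilityMeasure μ]
    (hne : ∀ z, complexMGF X μ z ≠ 0) {C : ℝ} (hle : ∀ t, mgf X μ t ≤ Real.exp (C * (1 + t ^ 2))) :
    ∃ (m : ℝ) (v : NNReal), μ.map X = gaussianReal m v := by
  have hexp : integrableExpSet X μ = Set.univ :=
    integrableExpSet_eq_univ_of_complexMGF_ne_zero fun t ↦ hne t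
  have hdiff : Differentiable ℂ (complexMGF X μ) := fun z ↦
    (hasDerivAt_complexMGF (by simp [hexp])).differentiableAt
  have hquad : ∀ᶠ z in Bornology.cobounded ℂ,
      ‖complexMGF X μ z‖ ≤ Real.exp (2 * |C| * ‖z‖ ^ 2) := by
    filter_upwards [eventually_cobounded_le_norm 1] with z hz
    have hre_sq : z.re ^ 2 ≤ ‖z‖ ^ 2 := sq_le_sq.2 (by simpa using Complex.abs_re_le_norm z)
    have hone : 1 ≤ ‖z‖ ^ 2 := one_le_pow₀ hz
    calc ‖complexMGF X μ z‖ ≤ mgf X μ z.re := norm_complexMGF_le_mgf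
      _ ≤ Real.exp (C * (1 + z.re ^ 2)) := hle z.re
      _ ≤ Real.exp (|C| * (‖z‖ ^ 2 + ‖z‖ ^ 2)) := by gcongr; exact le_abs_self C
      _ = Real.exp (2 * |C| * ‖z‖ ^ 2) := by ring_nf
  obtain ⟨p, hp, hXp⟩ := exists_polynomial_eq_exp_of_norm_le_exp hdiff hne hquad
  have hmgf (t : ℝ) : mgf X μ t =
      Real.exp ((p.coeff 0).re + (p.coeff 1).re * t + (p.coeff 2).re * t ^ 2) := by
    rw [← Complex.norm_of_nonneg mgf_nonneg, ← complexMGF_ofReal, hXp, Complex.norm_exp,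
      Polynomial.eval_eq_sum_range' (Nat.lt_succ_of_le hp)]
    simp [Finset.sum_range_succ, ← Complex.ofReal_pow]
  have hcoeff_zero : (p.coeff 0).re = 0 := by simpa using (hmgf 0).symm
  exact ⟨_, _, map_eq_gaussianReal_of_mgf_eq_exp fun t ↦ by rw [hmgf, hcoeff_zero, zero_add]⟩

theorem exists_map_eq_gaussianReal_of_indepFun_add [IsProbabilityMeasure μ]
    (hindep : IndepFun X Y μ) (hX : AEMeasurable X μ) (hY : AEMeasurable Y μ)
    {m : ℝ} {v : NNReal} (hsum : μ.map (X + Y) = gaussianReal m v) :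
    ∃ (m : ℝ) (v : NNReal), μ.map X = gaussianReal m v := by
  have hne (z : ℂ) : complexMGF X μ z * complexMGF Y μ z ≠ 0 := by
    rw [← complexMGF_add_of_indepFun hindep hX hY, complexMGF_gaussianReal hsum]
    exact Complex.exp_ne_zero _
  have hYexp : integrableExpSet Y μ = Set.univ :=
    integrableExpSet_eq_univ_of_complexMGF_ne_zero fun t ↦ right_ne_zero_of_mul (hne t)
  have hmgf_le (t : ℝ) : mgf X μ t ≤ Real.exp ((m - μ[Y]) * t + v / 2 * t ^ 2) := by
    have h := mgf_mul_exp_integral_le_mgf_add hindep hX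
      (integrable_of_mem_interior_integrableExpSet (by simp [hYexp]))
      (Set.eq_univ_iff_forall.1 hYexp t)
    rw [mgf_gaussianReal hsum, ← le_div_iff₀ (Real.exp_pos _), ← Real.exp_sub] at h
    convert! h using 2
    ring
  refine exists_map_eq_gaussianReal_of_complexMGF_ne_zero (C := |m - μ[Y]| + v / 2)
    (fun z ↦ left_ne_zero_of_mul (hne z)) fun t ↦ (hmgf_le t).trans (Real.exp_le_exp.2 ?_)
  have hlin : (m - μ[Y]) * t ≤ |m - μ[Y]| * (1 + t ^ 2) := by
    refine (le_abs_self _).trans ?_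
    rw [abs_mul]
    gcongr
    nlinarith [sq_nonneg (|t| - 1), sq_abs t]
  linarith [v.coe_nonneg]

end MomentGeneratingFunction

theorem cramer_decomposition {Ω : Type*} [MeasurableSpace Ω] (μ : Measure Ω)
    [IsProbabilityMeasure μ] (X Y : Ω → ℝ) (hX : Measurable X) (hY : Measurable Y)
    (hindep : IndepFun X Y μ)
    (hsum : ∃ (m : ℝ) (v : NNReal), μ.map (X + Y) = gaussianReal m v) :
    (∃ (m : ℝ) (v : NNReal), μ.map X = gaussianReal m v) ∧
      (∃ (m : ℝ) (v : NNReal), μ.map Y = gaussianReal m v) := by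
  obtain ⟨m, v, hadd⟩ := hsum
  exact ⟨exists_map_eq_gaussianReal_of_indepFun_add hindep hX.aemeasurable hY.aemeasurable hadd,
    exists_map_eq_gaussianReal_of_indepFun_add hindep.symm hY.aemeasurable hX.aemeasurable
      (by rwa [add_comm])⟩
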